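/- If a vector field v : ℝ^m → ℝ^m is continuous and satisfies v(d) · d ≥ 0 for all d with ‖d‖ = r (for some r > 0), then there exists a point d with ‖d‖ ≤ r such that v(d) = 0. -/

import Mathlib

open scoped RealInnerProductSpace

/-!
Suppose `v` has no zero. Perturbing it by a small multiple of the identity and smoothing gives a
`C¹` field `w`, still without zeros, that points strictly outward on the sphere. Following the ray
from `x` in the direction `w x` until it leaves the ball is then a `C¹` retraction `f` of the ball
onto its boundary. This is impossible, by the argument of Milnor and Rogers: put `g = f - id`, which
vanishes on the sphere. For small `t` the map `id + t • g` permutes the ball, so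
`∫ det (1 + t • Dg)` equals the volume of the ball. The integral is a polynomial in `t`, so this
persists at `t = 1`; but there the integrand is `det Df`, which vanishes because `f` takes values in
the sphere.
-/

open scoped NNReal Topology

open Set Metric MeasureTheory Module

section LipschitzPerturbation

theorem inter_frontier_nonempty_of_isPreconnected {X : Type*} [TopologicalSpace X] {s t : Set X}
    (ht : IsPreconnected t) (hts : (t ∩ s).Nonempty) (hts' : (t \ s).Nonempty) :
    (t ∩ frontier s).Nonempty := by
  by_contra hempty
  have hcover : t ⊆ interior s ∪ (closure s)ᶜ := fun x hx => by
    by_contra hx'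
    simp only [mem_union, mem_compl_iff, not_or, not_not] at hx'
    exact hempty ⟨x, hx, hx'.2, hx'.1⟩
  obtain ⟨x, hxt, hxs⟩ := hts
  obtain ⟨y, hyt, hys⟩ := hts'
  obtain ⟨z, -, hz, hz'⟩ := ht _ _ isOpen_interior isClosed_closure.isOpen_compl hcover
    ⟨x, hxt, (hcover hxt).resolve_right fun h => h (subset_closure hxs)⟩
    ⟨y, hyt, (hcover hyt).resolve_left fun h => hys (interior_subset h)⟩
  exact hz' (interior_subset_closure hz)

variable {E F : Type*} [NormedAddCommGroup E] [NormedSpace ℝ E] [NormedAddCommGroup F]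
  {s : Set E} {K : ℝ≥0}

theorem lipschitzWith_indicator_of_eq_zero_on_frontier {g : E → F} (hs : IsClosed s)
    (hg : LipschitzOnWith K g s) (h0 : ∀ x ∈ frontier s, g x = 0) :
    LipschitzWith K (s.indicator g) := by
  have hcross : ∀ x ∈ s, ∀ y ∉ s, dist (g x) 0 ≤ K * dist x y := by
    intro x hx y hy
    obtain ⟨z, hzseg, hz⟩ := inter_frontier_nonempty_of_isPreconnected
      (convex_segment x y).isPreconnected ⟨x, left_mem_segment ℝ x y, hx⟩
      ⟨y, right_mem_segment ℝ x y, hy⟩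
    calc dist (g x) 0 = dist (g x) (g z) := by rw [h0 z hz]
      _ ≤ K * dist x z := hg.dist_le_mul x hx z (hs.frontier_subset hz)
      _ ≤ K * dist x y := by
        gcongr
        linarith [dist_add_dist_of_mem_segment hzseg, dist_nonneg (x := z) (y := y)]
  refine LipschitzWith.of_dist_le_mul fun x y => ?_
  by_cases hx : x ∈ s <;> by_cases hy : y ∈ s
  · simpa only [indicator_of_mem hx, indicator_of_mem hy] using hg.dist_le_mul x hx y hy
  · simpa only [indicator_of_mem hx, indicator_of_notMem hy] using hcross x hx y hy
  · simpa only [indicator_of_mem hy, indicator_of_notMem hx, dist_comm] using hcross y hy x hx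
  · simp only [indicator_of_notMem hx, indicator_of_notMem hy, dist_self]
    positivity

variable [CompleteSpace E] {g : E → E}

theorem bijective_id_add_of_lipschitzWith (hg : LipschitzWith K g) (hK : K < 1) :
    Function.Bijective fun x => x + g x := by
  have happrox : ApproximatesLinearOn (fun x => x + g x)
      (ContinuousLinearEquiv.refl ℝ E : E →L[ℝ] E) univ K := by
    rw [ApproximatesLinearOn.approximatesLinearOn_iff_lipschitzOnWith, lipschitzOnWith_univ]
    convert hg using 1
    ext x
    simp
  have hsmall : Subsingleton E ∨ K < ‖((ContinuousLinearEquiv.refl ℝ E).symm : E →L[ℝ] E)‖₊⁻¹ := by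
    rcases subsingleton_or_nontrivial E with h | h
    · exact Or.inl h
    · exact Or.inr (by simpa using hK)
  exact ⟨injOn_univ.1 (happrox.injOn hsmall), happrox.surjective hsmall⟩

theorem bijOn_interior_id_add_of_lipschitzOnWith (hs : IsClosed s) (hg : LipschitzOnWith K g s)
    (h0 : ∀ x ∈ frontier s, g x = 0) (hK : K < 1) :
    BijOn (fun x => x + g x) (interior s) (interior s) := by
  have hbij : Function.Bijective fun x => x + s.indicator g x :=
    bijective_id_add_of_lipschitzWith (lipschitzWith_indicator_of_eq_zero_on_frontier hs hg h0) hK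
  have hfix : EqOn id (fun x => x + s.indicator g x) (interior s)ᶜ := by
    intro x hx
    by_cases hxs : x ∈ s
    · simp [hxs, h0 x ⟨subset_closure hxs, hx⟩]
    · simp [hxs]
  have hcompl := ((bijOn_id (interior s)ᶜ).congr hfix).compl hbij
  rw [compl_compl] at hcompl
  exact hcompl.congr fun x hx => by simp [interior_subset hx]

end LipschitzPerturbation

section Determinant

theorem det_id_add_pos_of_norm_lt_one {E : Type*} [NormedAddCommGroup E] [NormedSpace ℝ E]
    [CompleteSpace E] {A : E →L[ℝ] E} (hA : ‖A‖ < 1) :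
    0 < (ContinuousLinearMap.id ℝ E + A).det := by
  let d : ℝ → ℝ := fun t => (ContinuousLinearMap.id ℝ E + t • A).det
  have hcont : Continuous d := ContinuousLinearMap.continuous_det.comp (by fun_prop)
  have hne : ∀ t ∈ Icc (0 : ℝ) 1, d t ≠ 0 := by
    intro t ht
    have hnorm : ‖-(t • A)‖ < 1 := by
      rw [norm_neg, norm_smul, Real.norm_of_nonneg ht.1]
      exact (mul_le_of_le_one_left (norm_nonneg A) ht.2).trans_lt hA
    have hunit : IsUnit (1 - -(t • A)) := isUnit_one_sub_of_norm_lt_one hnorm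
    rw [sub_neg_eq_add] at hunit
    exact ((hunit.map (ContinuousLinearMap.toLinearMapRingHom (R₁ := ℝ) (M₁ := E))).map
      LinearMap.det).ne_zero
  have hzero : d 0 = 1 := by simp [d, ContinuousLinearMap.det]
  have hone : d 1 = (ContinuousLinearMap.id ℝ E + A).det := by simp [d]
  by_contra! hneg
  obtain ⟨t, ht, hdt⟩ := intermediate_value_Icc' zero_le_one hcont.continuousOn
    (show (0 : ℝ) ∈ Icc (d 1) (d 0) from ⟨hone ▸ hneg, hzero ▸ zero_le_one⟩)
  exact hne t ht hdt

theorem eval_reverse_charpoly_neg {R M : Type*} [CommRing R] [AddCommGroup M] [Module R M]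
    [Module.Finite R M] [Module.Free R M] (f : End R M) (t : R) :
    (-f).charpoly.reverse.eval t = LinearMap.det (1 + t • f) := by
  let b := Free.chooseBasis R M
  rw [← LinearMap.charpoly_toMatrix _ b, Matrix.reverse_charpoly, Matrix.charpolyRev,
    ← Polynomial.coe_evalRingHom, RingHom.map_det, ← LinearMap.det_toMatrix b]
  congr 1
  ext i j
  simp [Matrix.one_apply, LinearMap.toMatrix_one, apply_ite, mul_comm t]

end Determinant

section Integral

theorem integral_eval_eq_of_forall_mem_infinite {α 𝕜 : Type*} [MeasurableSpace α] [RCLike 𝕜]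
    {μ : Measure α} {P : α → Polynomial 𝕜} {n : ℕ} (hdeg : ∀ x, (P x).natDegree ≤ n)
    {S : Set 𝕜} (hS : S.Infinite) (hint : ∀ t ∈ S, Integrable (fun x => (P x).eval t) μ)
    {c : 𝕜} (hc : ∀ t ∈ S, ∫ x, (P x).eval t ∂μ = c) (t : 𝕜) :
    ∫ x, (P x).eval t ∂μ = c := by
  obtain ⟨T, hTS, hcard⟩ := hS.exists_subset_card_eq (n + 1)
  have hinj : InjOn id (T : Set 𝕜) := Function.injective_id.injOn
  let weight : 𝕜 → 𝕜 := fun a => (Lagrange.basis T id a).eval t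
  have hinterp : ∀ x, (P x).eval t = ∑ a ∈ T, (P x).eval a * weight a := by
    intro x
    have hlt : (P x).degree < T.card :=
      Polynomial.degree_le_natDegree.trans_lt <| by
        rw [hcard]
        exact_mod_cast Nat.lt_succ_of_le (hdeg x)
    have := congrArg (Polynomial.eval t) (Lagrange.eq_interpolate hinj hlt)
    simpa [Lagrange.interpolate_apply, Polynomial.eval_finsetSum] using this
  have hweight : ∑ a ∈ T, weight a = 1 := by
    rw [← Polynomial.eval_finsetSum, Lagrange.sum_basis hinj (Finset.card_pos.1 (by lia)),
      Polynomial.eval_one]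
  calc ∫ x, (P x).eval t ∂μ = ∫ x, ∑ a ∈ T, (P x).eval a * weight a ∂μ := by simp_rw [← hinterp]
    _ = ∑ a ∈ T, (∫ x, (P x).eval a ∂μ) * weight a := by
      rw [integral_finsetSum _ fun a ha => (hint a (hTS ha)).mul_const _]
      simp_rw [integral_mul_const]
    _ = ∑ a ∈ T, c * weight a := Finset.sum_congr rfl fun a ha => by rw [hc a (hTS ha)]
    _ = c := by rw [← Finset.mul_sum, hweight, mul_one]

variable {E : Type*} [NormedAddCommGroup E] [NormedSpace ℝ E] [FiniteDimensional ℝ E]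
  [MeasurableSpace E] [BorelSpace E] {μ : Measure E} [μ.IsAddHaarMeasure] {s : Set E}

theorem integrableOn_det_of_injOn {f : E → E} {f' : E → E →L[ℝ] E} (hs : MeasurableSet s)
    (hf' : ∀ x ∈ s, HasFDerivWithinAt f (f' x) s x) (hf : InjOn f s)
    (hdet : ∀ x ∈ s, 0 ≤ (f' x).det) (hfin : μ (f '' s) ≠ ⊤) :
    IntegrableOn (fun x => (f' x).det) s μ :=
  ((integrableOn_image_iff_integrableOn_abs_det_fderiv_smul μ hs hf' hf fun _ => (1 : ℝ)).1
    (integrableOn_const hfin)).congr_fun (fun x hx => by simp [abs_of_nonneg (hdet x hx)]) hs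

theorem setIntegral_det_of_injOn {f : E → E} {f' : E → E →L[ℝ] E} (hs : MeasurableSet s)
    (hf' : ∀ x ∈ s, HasFDerivWithinAt f (f' x) s x) (hf : InjOn f s)
    (hdet : ∀ x ∈ s, 0 ≤ (f' x).det) :
    ∫ x in s, (f' x).det ∂μ = μ.real (f '' s) :=
  calc ∫ x in s, (f' x).det ∂μ = ∫ x in s, |(f' x).det| • (1 : ℝ) ∂μ :=
        setIntegral_congr_fun hs fun x hx => by simp [abs_of_nonneg (hdet x hx)]
    _ = ∫ _ in f '' s, (1 : ℝ) ∂μ :=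
        (integral_image_eq_integral_abs_det_fderiv_smul μ hs hf' hf fun _ => (1 : ℝ)).symm
    _ = μ.real (f '' s) := by simp

variable {g : E → E} {K : ℝ≥0}

theorem integrableOn_and_setIntegral_det_id_add_fderiv_of_lt_one (hs : IsClosed s)
    (hfin : μ (interior s) ≠ ⊤) (hg : LipschitzOnWith K g s)
    (hd : DifferentiableOn ℝ g (interior s)) (h0 : ∀ x ∈ frontier s, g x = 0) (hK : K < 1) :
    IntegrableOn (fun x => (ContinuousLinearMap.id ℝ E + fderiv ℝ g x).det) (interior s) μ ∧
      ∫ x in interior s, (ContinuousLinearMap.id ℝ E + fderiv ℝ g x).det ∂μ =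
        μ.real (interior s) := by
  have hbij := bijOn_interior_id_add_of_lipschitzOnWith hs hg h0 hK
  have hder : ∀ x ∈ interior s, HasFDerivWithinAt (fun x => x + g x)
      (ContinuousLinearMap.id ℝ E + fderiv ℝ g x) (interior s) x := fun x hx =>
    ((hasFDerivAt_id x).add
      (hd.differentiableAt (isOpen_interior.mem_nhds hx)).hasFDerivAt).hasFDerivWithinAt
  have hdet : ∀ x ∈ interior s, 0 ≤ (ContinuousLinearMap.id ℝ E + fderiv ℝ g x).det :=
    fun x hx => (det_id_add_pos_of_norm_lt_one
      ((norm_fderiv_le_of_lipschitzOn ℝ (mem_interior_iff_mem_nhds.1 hx) hg).trans_lt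
        (by exact_mod_cast hK))).le
  have hmeas : MeasurableSet (interior s) := isOpen_interior.measurableSet
  constructor
  · exact integrableOn_det_of_injOn hmeas hder hbij.injOn hdet (by rwa [hbij.image_eq])
  · rw [setIntegral_det_of_injOn hmeas hder hbij.injOn hdet, hbij.image_eq]

theorem setIntegral_det_id_add_fderiv (hs : IsClosed s) (hfin : μ (interior s) ≠ ⊤)
    (hg : LipschitzOnWith K g s) (hd : DifferentiableOn ℝ g (interior s))
    (h0 : ∀ x ∈ frontier s, g x = 0) :
    ∫ x in interior s, (ContinuousLinearMap.id ℝ E + fderiv ℝ g x).det ∂μ =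
      μ.real (interior s) := by
  let P : E → Polynomial ℝ := fun x => (-(fderiv ℝ g x : End ℝ E)).charpoly.reverse
  have hdeg : ∀ x, (P x).natDegree ≤ finrank ℝ E := fun x =>
    (Polynomial.reverse_natDegree_le _).trans (LinearMap.charpoly_natDegree _).le
  have hP : ∀ (t : ℝ) (x : E),
      (P x).eval t = (ContinuousLinearMap.id ℝ E + fderiv ℝ (t • g) x).det := fun t x => by
    rw [fderiv_const_smul_field]
    exact eval_reverse_charpoly_neg _ t
  have hS : {t : ℝ | ‖t‖₊ * K < 1}.Infinite := by
    refine infinite_of_mem_nhds (0 : ℝ) (IsOpen.mem_nhds ?_ (by simp))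
    exact isOpen_lt (by fun_prop) continuous_const
  have hsmall : ∀ t ∈ {t : ℝ | ‖t‖₊ * K < 1},
      IntegrableOn (fun x => (P x).eval t) (interior s) μ ∧
        ∫ x in interior s, (P x).eval t ∂μ = μ.real (interior s) := by
    intro t ht
    simp_rw [hP]
    exact integrableOn_and_setIntegral_det_id_add_fderiv_of_lt_one hs hfin
      ((lipschitzWith_smul t).comp_lipschitzOnWith hg) (hd.const_smul t)
      (fun x hx => by simp [h0 x hx]) ht
  simpa [hP] using integral_eval_eq_of_forall_mem_infinite hdeg hS (fun t ht => (hsmall t ht).1)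
    (fun t ht => (hsmall t ht).2) 1

end Integral

section NoRetraction

variable {E F : Type*} [NormedAddCommGroup E] [InnerProductSpace ℝ E]
  [NormedAddCommGroup F] [NormedSpace ℝ F]

theorem inner_fderiv_eq_zero_of_eventually_norm_eq {f : F → E} {x : F} {R : ℝ}
    (hf : DifferentiableAt ℝ f x) (hconst : ∀ᶠ y in 𝓝 x, ‖f y‖ = R) (h : F) :
    ⟪f x, fderiv ℝ f x h⟫ = 0 := by
  have hzero : HasFDerivAt (‖f ·‖ ^ 2) (0 : F →L[ℝ] ℝ) x :=
    (hasFDerivAt_const (R ^ 2) x).congr_of_eventuallyEq (hconst.mono fun y hy => by simp [hy])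
  simpa using DFunLike.congr_fun (hf.hasFDerivAt.norm_sq.unique hzero) h

variable [FiniteDimensional ℝ E]

theorem det_fderiv_eq_zero_of_eventually_norm_eq {f : E → E} {x : E} {R : ℝ} (hR : R ≠ 0)
    (hf : DifferentiableAt ℝ f x) (hconst : ∀ᶠ y in 𝓝 x, ‖f y‖ = R) :
    (fderiv ℝ f x).det = 0 := by
  by_contra hdet
  obtain ⟨h, hh⟩ := (LinearMap.equivOfDetNeZero (fderiv ℝ f x : E →ₗ[ℝ] E) hdet).surjective (f x)
  have hfx : fderiv ℝ f x h = f x := hh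
  have horth := inner_fderiv_eq_zero_of_eventually_norm_eq hf hconst h
  rw [hfx, real_inner_self_eq_norm_sq, hconst.self_of_nhds] at horth
  exact hR (pow_eq_zero_iff two_ne_zero |>.1 horth)

theorem not_exists_contDiffOn_retraction_sphere {R : ℝ} (hR : 0 < R) :
    ¬∃ f : E → E, ContDiffOn ℝ 1 f (closedBall 0 R) ∧
      MapsTo f (closedBall 0 R) (sphere 0 R) ∧ ∀ x ∈ sphere 0 R, f x = x := by
  rintro ⟨f, hf, hmaps, hfix⟩
  borelize E
  let μ : Measure E := Measure.addHaar
  have hint : interior (closedBall (0 : E) R) = ball 0 R := interior_closedBall _ hR.ne'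
  have hdiff : ∀ x ∈ ball (0 : E) R, DifferentiableAt ℝ f x := fun x hx =>
    (hf.differentiableOn one_ne_zero).differentiableAt (closedBall_mem_nhds_of_mem hx)
  obtain ⟨K, hK⟩ := (hf.sub contDiffOn_id).exists_lipschitzOnWith one_ne_zero
    (convex_closedBall 0 R) (isCompact_closedBall 0 R)
  have hdet : ∀ x ∈ ball (0 : E) R,
      (ContinuousLinearMap.id ℝ E + fderiv ℝ (f - id) x).det = 0 := by
    intro x hx
    rw [fderiv_sub (hdiff x hx) differentiableAt_id, fderiv_id, add_sub_cancel]
    exact det_fderiv_eq_zero_of_eventually_norm_eq hR.ne' (hdiff x hx)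
      (Filter.mem_of_superset (closedBall_mem_nhds_of_mem hx) fun y hy => by simpa using hmaps hy)
  have hvol : μ.real (ball (0 : E) R) = 0 := by
    rw [← hint, ← setIntegral_det_id_add_fderiv (K := K) isClosed_closedBall
      (by rw [hint]; exact measure_ball_lt_top.ne) hK
      (fun x hx => ((hdiff x (hint ▸ hx)).sub differentiableAt_id).differentiableWithinAt)
      fun x hx => sub_eq_zero.2 (hfix x (frontier_closedBall_subset_sphere hx)), hint]
    exact setIntegral_eq_zero_of_forall_eq_zero hdet
  exact (ENNReal.toReal_pos (measure_ball_pos μ 0 hR).ne' measure_ball_lt_top.ne).ne' hvol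

end NoRetraction

section ExitPoint

variable {E F : Type*} [NormedAddCommGroup E] [InnerProductSpace ℝ E]
  [NormedAddCommGroup F] [NormedSpace ℝ F] {R : ℝ} {x u : E}

/-- A quarter of the discriminant of the quadratic equation `‖x + t • u‖ ^ 2 = R ^ 2` in `t`. -/
def exitDiscrim (R : ℝ) (x u : E) : ℝ :=
  ⟪x, u⟫ ^ 2 + ‖u‖ ^ 2 * (R ^ 2 - ‖x‖ ^ 2)

/-- The point where the ray from `x` in the direction `u` leaves the ball of radius `R` about the
origin: the larger root of `‖x + t • u‖ ^ 2 = R ^ 2` gives the time of exit. The value is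
meaningful only for `u ≠ 0` and `0 ≤ exitDiscrim R x u`. -/
noncomputable def exitPoint (R : ℝ) (x u : E) : E :=
  x + ((√(exitDiscrim R x u) - ⟪x, u⟫) / ‖u‖ ^ 2) • u

theorem exitDiscrim_pos (hx : ‖x‖ ≤ R) (hu : u ≠ 0) (hsphere : ‖x‖ = R → 0 < ⟪x, u⟫) :
    0 < exitDiscrim R x u := by
  rcases hx.eq_or_lt with heq | hlt
  · simpa only [exitDiscrim, heq, sub_self, mul_zero, add_zero] using pow_pos (hsphere heq) 2
  · have hgap : 0 < R ^ 2 - ‖x‖ ^ 2 :=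
      sub_pos.2 (pow_lt_pow_left₀ hlt (norm_nonneg x) two_ne_zero)
    exact add_pos_of_nonneg_of_pos (sq_nonneg _) (mul_pos (pow_pos (norm_pos_iff.2 hu) 2) hgap)

theorem norm_exitPoint (hR : 0 ≤ R) (hu : u ≠ 0) (hdiscrim : 0 ≤ exitDiscrim R x u) :
    ‖exitPoint R x u‖ = R := by
  have hu' : ‖u‖ ≠ 0 := norm_ne_zero_iff.2 hu
  have hroot := Real.sq_sqrt hdiscrim
  refine (sq_eq_sq₀ (norm_nonneg _) hR).1 ?_
  simp only [exitPoint, norm_add_sq_real, norm_smul, inner_smul_right, mul_pow, Real.norm_eq_abs,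
    sq_abs]
  generalize √(exitDiscrim R x u) = q at hroot
  rw [exitDiscrim] at hroot
  field_simp
  linear_combination hroot

theorem exitPoint_of_norm_eq (hx : ‖x‖ = R) (hu : 0 ≤ ⟪x, u⟫) : exitPoint R x u = x := by
  simp [exitPoint, exitDiscrim, hx, Real.sqrt_sq hu]

theorem contDiffOn_exitPoint {n : WithTop ℕ∞} {s : Set F} {p w : F → E} (hp : ContDiffOn ℝ n p s)
    (hw : ContDiffOn ℝ n w s) (hne : ∀ y ∈ s, w y ≠ 0)
    (hdiscrim : ∀ y ∈ s, exitDiscrim R (p y) (w y) ≠ 0) :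
    ContDiffOn ℝ n (fun y => exitPoint R (p y) (w y)) s := by
  have hinner : ContDiffOn ℝ n (fun y => ⟪p y, w y⟫) s := hp.inner ℝ hw
  have hdiscrim_smooth : ContDiffOn ℝ n (fun y => exitDiscrim R (p y) (w y)) s :=
    (hinner.pow 2).add ((hw.norm_sq ℝ).mul (contDiffOn_const.sub (hp.norm_sq ℝ)))
  exact hp.add ((((hdiscrim_smooth.sqrt hdiscrim).sub hinner).div (hw.norm_sq ℝ)
    fun y hy => pow_ne_zero 2 (norm_ne_zero_iff.2 (hne y hy))).smul hw)

end ExitPoint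

theorem exists_contDiff_dist_lt_of_continuousOn {E F : Type*} [NormedAddCommGroup E]
    [NormedSpace ℝ E] [FiniteDimensional ℝ E] [NormedAddCommGroup F] [NormedSpace ℝ F]
    [FiniteDimensional ℝ F] {f : E → F} {s : Set E} (hs : IsClosed s) (hf : ContinuousOn f s)
    (n : ℕ∞) {ε : ℝ} (hε : 0 < ε) :
    ∃ p : E → F, ContDiff ℝ n p ∧ ∀ x ∈ s, dist (p x) (f x) < ε := by
  obtain ⟨f', hf'⟩ := ContinuousMap.exists_restrict_eq hs ⟨_, hf.domRestrict⟩
  obtain ⟨p, hp, hpf, -⟩ := f'.continuous.exists_contDiff_approx n (ε := fun _ => ε)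
    continuous_const fun _ => hε
  have hext : ∀ x ∈ s, f' x = f x := fun x hx => DFunLike.congr_fun hf' ⟨x, hx⟩
  exact ⟨p, hp, fun x hx => hext x hx ▸ hpf x⟩

section OutwardField

variable {E : Type*} [NormedAddCommGroup E] [InnerProductSpace ℝ E] [FiniteDimensional ℝ E]
  {r : ℝ} {v : E → E}

theorem exists_zero_of_contDiffOn_of_inner_pos (hr : 0 < r)
    (hv : ContDiffOn ℝ 1 v (closedBall 0 r)) (hpos : ∀ x, ‖x‖ = r → 0 < ⟪x, v x⟫) :
    ∃ x, ‖x‖ ≤ r ∧ v x = 0 := by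
  by_contra! hne
  have hne' : ∀ x ∈ closedBall (0 : E) r, v x ≠ 0 := fun x hx => hne x (by simpa using hx)
  have hdiscrim : ∀ x ∈ closedBall (0 : E) r, 0 < exitDiscrim r x (v x) := fun x hx =>
    exitDiscrim_pos (by simpa using hx) (hne' x hx) (hpos x)
  refine not_exists_contDiffOn_retraction_sphere hr ⟨fun x => exitPoint r x (v x),
    contDiffOn_exitPoint contDiffOn_id hv hne' fun x hx => (hdiscrim x hx).ne',
    fun x hx => ?_, fun x hx => ?_⟩
  · simpa using norm_exitPoint hr.le (hne' x hx) (hdiscrim x hx).le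
  · have hx' : ‖x‖ = r := by simpa using hx
    exact exitPoint_of_norm_eq hx' (hpos x hx').le

theorem exists_norm_lt_of_inner_nonneg (hr : 0 < r) (hv : ContinuousOn v (closedBall 0 r))
    (hbd : ∀ x, ‖x‖ = r → 0 ≤ ⟪v x, x⟫) {δ : ℝ} (hδ : 0 < δ) : ∃ x, ‖x‖ ≤ r ∧ ‖v x‖ < δ := by
  obtain ⟨p, hp, hpv⟩ := exists_contDiff_dist_lt_of_continuousOn isClosed_closedBall hv 1
    (half_pos hδ)
  have hclose : ∀ x, ‖x‖ ≤ r → ‖p x - v x‖ < δ / 2 := fun x hx => by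
    simpa [dist_eq_norm] using hpv x (by simpa using hx)
  let ε := δ / 2 / r
  have hε : 0 < ε := by positivity
  have hεr : ε * r = δ / 2 := div_mul_cancel₀ _ hr.ne'
  have hout : ∀ x, ‖x‖ = r → 0 < ⟪x, p x + ε • x⟫ := by
    intro x hx
    have herror : -(r * (δ / 2)) < ⟪x, p x - v x⟫ := by
      refine neg_lt_of_abs_lt ((abs_real_inner_le_norm _ _).trans_lt ?_)
      rw [hx]
      exact mul_lt_mul_of_pos_left (hclose x hx.le) hr
    calc 0 < ⟪x, p x - v x⟫ + ⟪v x, x⟫ + ε * r * r := by rw [hεr]; linarith [hbd x hx]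
      _ = ⟪x, p x + ε • x⟫ := by
        rw [inner_sub_right, inner_add_right, inner_smul_right, real_inner_self_eq_norm_sq, hx,
          real_inner_comm (v x)]
        ring
  obtain ⟨x, hx, hzero⟩ := exists_zero_of_contDiffOn_of_inner_pos hr
    (hp.add (contDiff_id.const_smul ε)).contDiffOn hout
  refine ⟨x, hx, ?_⟩
  have hpx : ‖p x‖ ≤ δ / 2 := by
    rw [eq_neg_of_add_eq_zero_left hzero, norm_neg, id, norm_smul, Real.norm_of_nonneg hε.le, ← hεr]
    gcongr
  linarith [hclose x hx, norm_le_norm_add_norm_sub (p x) (v x)]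

theorem stmt_0_general (hv : ContinuousOn v (closedBall 0 r)) (hr : 0 < r)
    (hbd : ∀ d, ‖d‖ = r → 0 ≤ ⟪v d, d⟫) : ∃ d, ‖d‖ ≤ r ∧ v d = 0 := by
  obtain ⟨d, hd, hmin⟩ := (isCompact_closedBall (0 : E) r).exists_isMinOn
    (nonempty_closedBall.2 hr.le) hv.norm
  refine ⟨d, by simpa using hd, ?_⟩
  by_contra hvd
  obtain ⟨x, hx, hlt⟩ := exists_norm_lt_of_inner_nonneg hr hv hbd (norm_pos_iff.2 hvd)
  exact hlt.not_ge (hmin (by simpa using hx))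

end OutwardField

/-- Brouwer-type zero lemma used in Evans' Galerkin construction:
a continuous vector field on ℝ^m pointing outward on the sphere of radius `r`
has a zero in the closed ball of radius `r`. -/
theorem stmt_0 {m : ℕ} (v : EuclideanSpace ℝ (Fin m) → EuclideanSpace ℝ (Fin m))
    (hv : Continuous v) (r : ℝ) (hr : 0 < r)
    (hbd : ∀ d : EuclideanSpace ℝ (Fin m), ‖d‖ = r → 0 ≤ ⟪v d, d⟫) :
    ∃ d : EuclideanSpace ℝ (Fin m), ‖d‖ ≤ r ∧ v d = 0 :=
  stmt_0_general hv.continuousOn hr hbd
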